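/- arXiv:2602.18969 — 2 statements merged into one kernel-verified Lean document; each statement's English description precedes it below -/
import Mathlib

section
/- The number of 2-dimensional subspaces W ⊆ E_3 such that all three nonzero elements of W have a 2-element representative equals 56. (These correspond to Klein coverings of hyperelliptic genus 3 curves of type I.1, with generators η = w_1 − w_2, ξ = w_1 − w_3; the degree of the forgetful map on this component is 56 = C(8,3).) -/
/-!
Addition in `E3` is symmetric difference of even subsets, and an even subset represents `0` exactly
when it is `∅` or everything. A triple `T` of points yields the plane `tripleSpace T` of classes of
even subsets of `T`: the four even subsets of `T` have distinct classes (`finrank_tripleSpace`), and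
the nonempty ones are pairs. The triple is recovered from its plane because two pairs with the
same class are equal (`cls_inj_of_card_lt`).

Conversely, let `x`, `y` be a basis of a plane whose nonzero elements are all classes of pairs, say
`x = cls A`, `y = cls B`, `x + y = cls C`. Then `A ∆ B` is `C` or its complement, so it has `2` or
`6` elements; as it has at most `4`, it has `2`, whence `A ∪ B` has three elements
(`card_union_eq_three`) and the plane is `tripleSpace (A ∪ B)`. So the planes correspond to the
`8.choose 3 = 56` triples.
-/


open Finset Submodule

noncomputable section

def sumMap : (Fin 8 → ZMod 2) →ₗ[ZMod 2] ZMod 2 where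
  toFun v := ∑ i, v i
  map_add' v w := by simp [Finset.sum_add_distrib]
  map_smul' c v := by simp [Finset.mul_sum]

def V3 : Submodule (ZMod 2) (Fin 8 → ZMod 2) := LinearMap.ker sumMap

@[simp] lemma sumMap_apply (v : Fin 8 → ZMod 2) : sumMap v = ∑ i, v i := rfl

lemma mem_V3 (v : Fin 8 → ZMod 2) : v ∈ V3 ↔ ∑ i, v i = 0 := by
  simp [V3, LinearMap.mem_ker]

def onesV : V3 := ⟨fun _ => 1, by rw [mem_V3]; decide⟩

abbrev E3 := V3 ⧸ span (ZMod 2) {onesV}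

def indFun (S : Finset (Fin 8)) : Fin 8 → ZMod 2 := fun i => if i ∈ S then 1 else 0

open Classical in
def cls (S : Finset (Fin 8)) : E3 :=
  if h : indFun S ∈ V3 then Submodule.Quotient.mk (⟨indFun S, h⟩ : V3) else 0

/-- `x` has a `k`-element representative -/
def hasRep (k : ℕ) (x : E3) : Prop := ∃ S : Finset (Fin 8), S.card = k ∧ cls S = x

open scoped symmDiff

lemma eq_zero_or_eq_one : ∀ c : ZMod 2, c = 0 ∨ c = 1 := by decide

lemma indFun_mem_V3 (S : Finset (Fin 8)) : indFun S ∈ V3 ↔ Even S.card := by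
  rw [mem_V3]
  simp only [indFun, Finset.sum_boole]
  rw [Finset.filter_mem_eq_inter, Finset.univ_inter, ZMod.natCast_eq_zero_iff_even]

lemma indFun_symmDiff (A B : Finset (Fin 8)) : indFun (A ∆ B) = indFun A + indFun B := by
  funext i
  have h2 : (1 : ZMod 2) + 1 = 0 := by decide
  by_cases hA : i ∈ A <;> by_cases hB : i ∈ B <;>
    simp [indFun, Finset.mem_symmDiff, hA, hB, h2]

lemma even_symmDiff {A B : Finset (Fin 8)} (hA : Even A.card) (hB : Even B.card) :
    Even (A ∆ B).card := by
  rw [← indFun_mem_V3] at *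
  rw [indFun_symmDiff]
  exact V3.add_mem hA hB

lemma cls_of_even {A : Finset (Fin 8)} (hA : Even A.card) :
    cls A = Submodule.Quotient.mk (⟨indFun A, (indFun_mem_V3 A).2 hA⟩ : V3) :=
  dif_pos _

lemma cls_symmDiff {A B : Finset (Fin 8)} (hA : Even A.card) (hB : Even B.card) :
    cls (A ∆ B) = cls A + cls B := by
  rw [cls_of_even hA, cls_of_even hB, cls_of_even (even_symmDiff hA hB),
    ← Submodule.Quotient.mk_add]
  congr 1
  exact Subtype.ext (indFun_symmDiff A B)

lemma cls_eq_zero {A : Finset (Fin 8)} (hA : Even A.card) :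
    cls A = 0 ↔ A = ∅ ∨ A = univ := by
  rw [cls_of_even hA, Submodule.Quotient.mk_eq_zero, Submodule.mem_span_singleton]
  constructor
  · rintro ⟨c, hc⟩
    have hv (i : Fin 8) : c = indFun A i := by
      have := congrFun (congrArg Subtype.val hc) i
      simpa [onesV] using this
    rcases eq_zero_or_eq_one c with rfl | rfl
    · left
      ext i
      have := hv i
      by_cases h : i ∈ A <;> simp [indFun, h] at this ⊢
    · right
      ext i
      have := hv i
      by_cases h : i ∈ A <;> simp [indFun, h] at this ⊢
  · rintro (rfl | rfl)
    · exact ⟨0, Subtype.ext (by funext i; simp [indFun])⟩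
    · exact ⟨1, Subtype.ext (by funext i; simp [indFun, onesV])⟩

lemma cls_eq_iff {A B : Finset (Fin 8)} (hA : Even A.card) (hB : Even B.card) :
    cls A = cls B ↔ A = B ∨ A ∆ B = univ := by
  rw [← sub_eq_zero, ZModModule.sub_eq_add, ← cls_symmDiff hA hB,
    cls_eq_zero (even_symmDiff hA hB)]
  exact or_congr_left symmDiff_eq_bot

lemma card_symmDiff_add (A B : Finset (Fin 8)) :
    (A ∆ B).card + (A ∩ B).card = (A ∪ B).card := by
  have h := Finset.card_sdiff_add_card_eq_card (Finset.inter_subset_union (s := A) (t := B))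
  rwa [show (A ∪ B) \ (A ∩ B) = A ∆ B from (symmDiff_eq_sup_sdiff_inf A B).symm] at h

/-- Small even subsets are determined by their class: an ambiguity would be a complementary pair,
which has total size `8`. -/
lemma cls_inj_of_card_lt {A B : Finset (Fin 8)} (hA : Even A.card) (hB : Even B.card)
    (hlt : A.card + B.card < 8) (h : cls A = cls B) : A = B := by
  refine ((cls_eq_iff hA hB).1 h).resolve_right fun hu => ?_
  have h1 := card_symmDiff_add A B
  have h2 := Finset.card_union_le A B
  rw [hu, Finset.card_univ, Fintype.card_fin] at h1
  omega

/-- The subspace of `E3` formed by the classes of the even subsets of `T`. -/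
def tripleSpace (T : Finset (Fin 8)) : Submodule (ZMod 2) E3 where
  carrier := {x | ∃ A ⊆ T, Even A.card ∧ cls A = x}
  zero_mem' := ⟨∅, by simp, by simp, (cls_eq_zero (by simp)).2 (Or.inl rfl)⟩
  add_mem' := by
    rintro _ _ ⟨A, hAT, hA, rfl⟩ ⟨B, hBT, hB, rfl⟩
    exact ⟨A ∆ B, symmDiff_le_sup.trans (Finset.union_subset hAT hBT), even_symmDiff hA hB,
      cls_symmDiff hA hB⟩
  smul_mem' := by
    rintro c _ ⟨A, hAT, hA, rfl⟩
    rcases eq_zero_or_eq_one c with rfl | rfl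
    · exact ⟨∅, by simp, by simp, by rw [zero_smul]; exact (cls_eq_zero (by simp)).2 (Or.inl rfl)⟩
    · exact ⟨A, hAT, hA, by rw [one_smul]⟩

lemma mem_tripleSpace {T : Finset (Fin 8)} {x : E3} :
    x ∈ tripleSpace T ↔ ∃ A ⊆ T, Even A.card ∧ cls A = x := Iff.rfl

lemma even_le_three {n : ℕ} (hn : Even n) (h3 : n ≤ 3) : n = 0 ∨ n = 2 := by
  obtain ⟨k, rfl⟩ := hn
  omega

lemma card_even_subsets : ∀ T ∈ powersetCard 3 (univ : Finset (Fin 8)),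
    (T.powerset.filter fun A => Even A.card).card = 4 := by
  decide +kernel

lemma finrank_tripleSpace {T : Finset (Fin 8)} (hT : T.card = 3) :
    Module.finrank (ZMod 2) (tripleSpace T) = 2 := by
  have himg : (tripleSpace T : Set E3) = cls '' (T.powerset.filter fun A => Even A.card) := by
    ext x
    simp [mem_tripleSpace, and_assoc]
  have hinj : Set.InjOn cls (T.powerset.filter fun A => Even A.card : Finset (Finset (Fin 8))) := by
    intro A hA B hB h
    simp only [coe_filter, mem_powerset, Set.mem_ofPred_eq] at hA hB
    have h1 := Finset.card_le_card hA.1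
    have h2 := Finset.card_le_card hB.1
    exact cls_inj_of_card_lt hA.2 hB.2 (by omega) h
  have hcard : Nat.card (tripleSpace T) = 4 := by
    change Nat.card (tripleSpace T : Set E3) = 4
    rw [himg, Nat.card_coe_set_eq, hinj.ncard_image, Set.ncard_coe_finset]
    exact card_even_subsets T (by simp [hT])
  have h := Module.natCard_eq_pow_finrank (K := ZMod 2) (V := tripleSpace T)
  rw [hcard, Nat.card_zmod] at h
  exact (Nat.pow_right_injective le_rfl (h.symm.trans (by norm_num : 4 = 2 ^ 2)))

lemma hasRep_of_mem_tripleSpace {T : Finset (Fin 8)} (hT : T.card = 3) {x : E3}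
    (hx : x ∈ tripleSpace T) (h0 : x ≠ 0) : hasRep 2 x := by
  obtain ⟨A, hAT, hA, rfl⟩ := hx
  refine ⟨A, (even_le_three hA (hT ▸ Finset.card_le_card hAT)).resolve_left fun h => h0 ?_, rfl⟩
  exact (cls_eq_zero hA).2 (Or.inl (Finset.card_eq_zero.1 h))

lemma subset_of_tripleSpace_le {T T' : Finset (Fin 8)} (hT : T.card = 3) (hT' : T'.card = 3)
    (h : tripleSpace T ≤ tripleSpace T') : T ⊆ T' := by
  intro i hi
  -- any pair in `T` through `i` also lies in `T'`
  obtain ⟨j, hj, hji⟩ := Finset.exists_mem_ne (by omega : 1 < T.card) i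
  have hc : (T.erase j).card = 2 := by rw [Finset.card_erase_of_mem hj, hT]
  have he : Even (T.erase j).card := by rw [hc]; exact even_two
  obtain ⟨A, hAT, hA, hcls⟩ := h ⟨T.erase j, Finset.erase_subset _ _, he, rfl⟩
  have hle := Finset.card_le_card hAT
  have := cls_inj_of_card_lt hA he (by omega) hcls
  exact hAT (this ▸ Finset.mem_erase.2 ⟨hji.symm, hi⟩)

/-- Two distinct pairs whose classes sum to the class of a pair share exactly one point. -/
lemma card_union_eq_three {A B C : Finset (Fin 8)} (hA : A.card = 2) (hB : B.card = 2)
    (hC : C.card = 2) (h : cls A + cls B = cls C) : (A ∪ B).card = 3 := by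
  have eA : Even A.card := hA ▸ even_two
  have eB : Even B.card := hB ▸ even_two
  have eC : Even C.card := hC ▸ even_two
  have h1 := card_symmDiff_add A B
  have h2 := Finset.card_union_add_card_inter A B
  rw [← cls_symmDiff eA eB] at h
  have := cls_inj_of_card_lt (even_symmDiff eA eB) eC (by omega) h
  rw [this] at h1
  omega

lemma exists_eq_tripleSpace {W : Submodule (ZMod 2) E3} (hW : Module.finrank (ZMod 2) W = 2)
    (hrep : ∀ x ∈ W, x ≠ 0 → hasRep 2 x) : ∃ T : Finset (Fin 8), T.card = 3 ∧ tripleSpace T = W := by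
  let b := Module.finBasisOfFinrankEq (ZMod 2) W hW
  have hli : LinearIndependent (ZMod 2) fun i => (b i : E3) :=
    b.linearIndependent.map' W.subtype (Submodule.ker_subtype W)
  have hsum : (b 0 : E3) + b 1 ≠ 0 := fun h => by
    rw [← ZModModule.sub_eq_add, sub_eq_zero] at h
    exact absurd (hli.injective h) (by decide)
  obtain ⟨A, hA, hxA⟩ := hrep _ (b 0).2 (hli.ne_zero 0)
  obtain ⟨B, hB, hyB⟩ := hrep _ (b 1).2 (hli.ne_zero 1)
  obtain ⟨C, hC, hzC⟩ := hrep _ (W.add_mem (b 0).2 (b 1).2) hsum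
  have hT : (A ∪ B).card = 3 := card_union_eq_three hA hB hC (by rw [hxA, hyB, hzC])
  refine ⟨A ∪ B, hT, ?_⟩
  have hspan : Module.finrank (ZMod 2) (span (ZMod 2) (Set.range fun i => (b i : E3))) = 2 := by
    rw [finrank_span_eq_card hli, Fintype.card_fin]
  have h1 : span (ZMod 2) (Set.range fun i => (b i : E3)) = W :=
    Submodule.eq_of_le_of_finrank_eq
      (Submodule.span_le.2 (Set.range_subset_iff.2 fun i => (b i).2)) (hspan.trans hW.symm)
  have h2 : span (ZMod 2) (Set.range fun i => (b i : E3)) = tripleSpace (A ∪ B) := by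
    refine Submodule.eq_of_le_of_finrank_eq
      (Submodule.span_le.2 (Set.range_subset_iff.2 fun i => ?_))
      (hspan.trans (finrank_tripleSpace hT).symm)
    fin_cases i
    · exact ⟨A, Finset.subset_union_left, hA ▸ even_two, hxA⟩
    · exact ⟨B, Finset.subset_union_right, hB ▸ even_two, hyB⟩
  exact h2.symm.trans h1

/-- the number of 2-dimensional subspaces `W ⊆ E₃` all three of whose
nonzero elements have a 2-element representative equals 56 (Klein coverings of
hyperelliptic genus 3 curves of type I.1). -/
theorem statement7 :
    Nat.card {W : Submodule (ZMod 2) E3 //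
      Module.finrank (ZMod 2) W = 2 ∧ ∀ x ∈ W, x ≠ 0 → hasRep 2 x} = 56 := by
  let F : {T : Finset (Fin 8) // T.card = 3} → {W : Submodule (ZMod 2) E3 //
      Module.finrank (ZMod 2) W = 2 ∧ ∀ x ∈ W, x ≠ 0 → hasRep 2 x} := fun T =>
    ⟨tripleSpace T, finrank_tripleSpace T.2, fun _ => hasRep_of_mem_tripleSpace T.2⟩
  have hF : Function.Bijective F := by
    constructor
    · rintro ⟨T, hT⟩ ⟨T', hT'⟩ h
      have h : tripleSpace T = tripleSpace T' := congrArg Subtype.val h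
      exact Subtype.ext ((subset_of_tripleSpace_le hT hT' h.le).antisymm
        (subset_of_tripleSpace_le hT' hT h.ge))
    · rintro ⟨W, hW, hrep⟩
      obtain ⟨T, hT, h⟩ := exists_eq_tripleSpace hW hrep
      exact ⟨⟨T, hT⟩, Subtype.ext h⟩
  rw [← Nat.card_eq_of_bijective F hF, Nat.card_eq_fintype_card, Fintype.card_finset_len,
    Fintype.card_fin]
  decide

end
end

section
/- If W ⊆ E_3 is a 2-dimensional subspace all three of whose nonzero elements have a 2-element representative, then there exists a unique 3-element subset {i,j,k} ⊆ I such that the three nonzero elements of W are [{i,j}], [{i,k}], [{j,k}]; conversely, every 3-element subset of I determines such a 2-dimensional subspace. Hence these subspaces (type I.1) are in bijection with the 56 three-element subsets of an 8-element set. -/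
/-! For `i ≠ j` let `pairCls i j = [{i, j}]`, and let `pairCls i i = 0`; then
`pairCls i j + pairCls j k = pairCls i k` always holds.  Three pairs cover at most six of the eight
points, so if three such classes sum to zero, which a priori says something only modulo the all-ones
function, then the sum of the indicator functions is itself zero (`eq_zero_of_pairCls_sum`).
Consequently `pairCls i j` determines `{i, j}` (`pairCls_inj`), and if `[{i, j}] + [{k, l}]` is
again the class of a pair, then the two pairs meet in exactly one point (`exists_common`); this
yields the triple.  The triple is recovered from the set of nonzero elements as the union of the
pairs that occur in it, and a subspace is determined by its nonzero elements, so subspaces and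
triples correspond bijectively. -/

open Finset Submodule

noncomputable section

/-- The function `e_i + e_j` as an element of `V3`: the indicator function of `{i, j}` if `i ≠ j`,
and zero if `i = j`. -/
def pairV (i j : Fin 8) : V3 :=
  ⟨Pi.single i 1 + Pi.single j 1, by
    rw [mem_V3]
    simp only [Pi.add_apply, Finset.sum_add_distrib, Finset.sum_pi_single', Finset.mem_univ,
      if_true]
    decide⟩

/-- The class of `e_i + e_j` in `E3`, which unlike `cls {i, j}` is additive also for `i = j`. -/
def pairCls (i j : Fin 8) : E3 := Submodule.Quotient.mk (pairV i j)

lemma pairV_apply (i j t : Fin 8) :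
    (pairV i j : Fin 8 → ZMod 2) t = (if t = i then 1 else 0) + (if t = j then 1 else 0) := by
  simp [pairV, Pi.single_apply]

lemma cls_pair {i j : Fin 8} (h : i ≠ j) : cls {i, j} = pairCls i j := by
  have key : indFun {i, j} = (pairV i j : Fin 8 → ZMod 2) := by
    funext t
    rw [pairV_apply]
    simp only [indFun, Finset.mem_insert, Finset.mem_singleton]
    grind
  have hm : indFun {i, j} ∈ V3 := key ▸ (pairV i j).2
  rw [cls, dif_pos hm, pairCls]
  congr 1
  exact Subtype.ext key

lemma zmod_two_add_self (a : ZMod 2) : a + a = 0 := CharTwo.add_self_eq_zero a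

lemma zmod_two_cases (a : ZMod 2) : a = 0 ∨ a = 1 := by
  revert a
  decide

lemma pairCls_comm (i j : Fin 8) : pairCls i j = pairCls j i := by
  unfold pairCls
  congr 1
  ext t
  rw [pairV_apply, pairV_apply, add_comm]

lemma pairCls_self (i : Fin 8) : pairCls i i = 0 := by
  have : pairV i i = 0 := by
    ext t
    rw [pairV_apply, zmod_two_add_self]
    rfl
  rw [pairCls, this, Submodule.Quotient.mk_zero]

lemma pairCls_add (i j k : Fin 8) : pairCls i j + pairCls j k = pairCls i k := by
  unfold pairCls
  rw [← Submodule.Quotient.mk_add]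
  congr 1
  ext t
  simp only [Submodule.coe_add, Pi.add_apply, pairV_apply]
  linear_combination zmod_two_add_self (if t = j then 1 else 0)

lemma pairCls_add_self (i j : Fin 8) : pairCls i j + pairCls i j = 0 := by
  rw [← pairCls_self i, ← pairCls_add i j i, pairCls_comm j i]

/-- A relation among three pair classes lifts to the functions themselves: a coefficient of the
all-ones function would be seen at a point outside the three pairs. -/
lemma eq_zero_of_pairCls_sum {i j k l m n : Fin 8}
    (h : pairCls i j + pairCls k l + pairCls m n = 0) (t : Fin 8) :
    (pairV i j : Fin 8 → ZMod 2) t + (pairV k l : Fin 8 → ZMod 2) t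
      + (pairV m n : Fin 8 → ZMod 2) t = 0 := by
  unfold pairCls at h
  rw [← Submodule.Quotient.mk_add, ← Submodule.Quotient.mk_add, Submodule.Quotient.mk_eq_zero,
    Submodule.mem_span_singleton] at h
  obtain ⟨c, hc⟩ := h
  have hval : ∀ s, c = (pairV i j : Fin 8 → ZMod 2) s + (pairV k l : Fin 8 → ZMod 2) s
      + (pairV m n : Fin 8 → ZMod 2) s := fun s => by
    have := congrFun (congrArg Subtype.val hc) s
    simpa [onesV] using this
  obtain ⟨s, hs⟩ : ∃ s, s ∉ ({i, j, k, l, m, n} : Finset (Fin 8)) := by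
    by_contra! hall
    have h8 : (Finset.univ : Finset (Fin 8)).card ≤ ({i, j, k, l, m, n} : Finset (Fin 8)).card :=
      Finset.card_le_card fun s _ => hall s
    have h6 := Finset.card_le_six (a := i) (b := j) (c := k) (d := l) (e := m) (f := n)
    simp at h8
    omega
  have hc0 : c = 0 := by
    rw [hval s]
    simp only [Finset.mem_insert, Finset.mem_singleton, not_or] at hs
    simp [pairV_apply, hs]
  rw [← hval t, hc0]

/-- A pair class determines the pair. -/
lemma pairCls_inj {i j k l : Fin 8} (hij : i ≠ j) (h : pairCls i j = pairCls k l) :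
    (i = k ∧ j = l) ∨ (i = l ∧ j = k) := by
  have h0 : pairCls i j + pairCls k l + pairCls i i = 0 := by
    rw [pairCls_self, add_zero, h, pairCls_add_self]
  have h1 := eq_zero_of_pairCls_sum h0 i
  have h2 := eq_zero_of_pairCls_sum h0 j
  simp only [pairV_apply] at h1 h2
  have h10 : (1 : ZMod 2) ≠ 0 := one_ne_zero
  grind

lemma pairCls_ne_zero {i j : Fin 8} (hij : i ≠ j) : pairCls i j ≠ 0 := by
  rw [← pairCls_self i]
  intro h
  have := pairCls_inj hij h
  grind

/-- If a sum of two pair classes is a pair class, the two pairs share a point. -/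
lemma exists_common {i j k l m n : Fin 8} (hij : i ≠ j) (hkl : k ≠ l)
    (h : pairCls i j + pairCls k l = pairCls m n) : i = k ∨ i = l ∨ j = k ∨ j = l := by
  have h0 : pairCls i j + pairCls k l + pairCls m n = 0 := by
    rw [h, pairCls_add_self]
  have h1 := eq_zero_of_pairCls_sum h0 i
  have h2 := eq_zero_of_pairCls_sum h0 j
  have h3 := eq_zero_of_pairCls_sum h0 k
  simp only [pairV_apply] at h1 h2 h3
  have h10 : (1 : ZMod 2) ≠ 0 := one_ne_zero
  grind

/-- The set of classes of the two-element subsets of `K`. -/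
def pairSet (K : Finset (Fin 8)) : Set E3 := {x : E3 | ∃ i ∈ K, ∃ j ∈ K, i ≠ j ∧ x = cls {i, j}}

/-- Every point of `K` lies in a pair contained in `K`, so `K` is the union of its pairs. -/
lemma subset_of_pairSet_subset {K L : Finset (Fin 8)} (hK : 1 < K.card)
    (h : pairSet K ⊆ pairSet L) : K ⊆ L := by
  intro i hi
  obtain ⟨j, hj, hji⟩ := Finset.exists_mem_ne hK i
  obtain ⟨k, hk, l, hl, hkl, e⟩ := h ⟨i, hi, j, hj, hji.symm, rfl⟩
  rw [cls_pair hji.symm, cls_pair hkl] at e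
  rcases pairCls_inj hji.symm e with ⟨rfl, _⟩ | ⟨rfl, _⟩ <;> assumption

lemma pairSet_triple {a b c : Fin 8} (hab : a ≠ b) (hac : a ≠ c) (hbc : b ≠ c) :
    pairSet {a, b, c} = {pairCls a b, pairCls a c, pairCls a b + pairCls a c} := by
  have e : pairCls a b + pairCls a c = pairCls b c := by rw [pairCls_comm a b, pairCls_add]
  rw [e]
  ext x
  constructor
  · rintro ⟨i, hi, j, hj, hij, rfl⟩
    rw [cls_pair hij]
    simp only [Finset.mem_insert, Finset.mem_singleton] at hi hj
    rcases hi with rfl | rfl | rfl <;> rcases hj with rfl | rfl | rfl <;>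
      simp_all [pairCls_comm]
  · rintro (rfl | rfl | rfl)
    · exact ⟨a, by simp, b, by simp, hab, (cls_pair hab).symm⟩
    · exact ⟨a, by simp, c, by simp, hac, (cls_pair hac).symm⟩
    · exact ⟨b, by simp, c, by simp, hbc, (cls_pair hbc).symm⟩

lemma linearIndependent_pair_zmod_two {x y : E3} (hx : x ≠ 0) (hy : y ≠ 0) (hxy : x ≠ y) :
    LinearIndependent (ZMod 2) ![x, y] := by
  rw [LinearIndependent.pair_iff' hx]
  intro a
  rcases zmod_two_cases a with rfl | rfl
  · simpa using hy.symm
  · simpa using hxy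

lemma nonzero_span_pair {x y : E3} (h : LinearIndependent (ZMod 2) ![x, y]) :
    {z : E3 | z ∈ span (ZMod 2) {x, y} ∧ z ≠ 0} = {x, y, x + y} := by
  ext z
  simp only [Set.mem_ofPred_eq, Submodule.mem_span_pair, Set.mem_insert_iff,
    Set.mem_singleton_iff]
  rw [LinearIndependent.pair_iff] at h
  constructor
  · rintro ⟨⟨a, b, rfl⟩, hz⟩
    rcases zmod_two_cases a with rfl | rfl <;> rcases zmod_two_cases b with rfl | rfl <;> simp_all
  · rintro (rfl | rfl | rfl)
    · exact ⟨⟨1, 0, by simp⟩, fun e => by simpa using h 1 0 (by simpa using e)⟩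
    · exact ⟨⟨0, 1, by simp⟩, fun e => by simpa using h 0 1 (by simpa using e)⟩
    · exact ⟨⟨1, 1, by simp⟩, fun e => by simpa using h 1 1 (by simpa using e)⟩

lemma exists_eq_span_pair {W : Submodule (ZMod 2) E3} (hW : Module.finrank (ZMod 2) W = 2) :
    ∃ x y : E3, LinearIndependent (ZMod 2) ![x, y] ∧ W = span (ZMod 2) {x, y} := by
  let b := Module.finBasisOfFinrankEq (ZMod 2) W hW
  have e : ![(b 0 : E3), (b 1 : E3)] = W.subtype ∘ b := by
    funext t
    fin_cases t <;> rfl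
  refine ⟨b 0, b 1, ?_, ?_⟩
  · rw [e]
    exact b.linearIndependent.map' _ W.ker_subtype
  · have hr : ({(b 0 : E3), (b 1 : E3)} : Set E3) = W.subtype '' Set.range b := by
      rw [← Set.range_comp, ← e]
      simp [Matrix.range_cons, Set.pair_comm]
    rw [hr, Submodule.span_image, b.span_eq, Submodule.map_top, Submodule.range_subtype]

lemma exists_triple {W : Submodule (ZMod 2) E3} (hW : Module.finrank (ZMod 2) W = 2)
    (hrep : ∀ x ∈ W, x ≠ 0 → hasRep 2 x) :
    ∃ K : Finset (Fin 8), K.card = 3 ∧ {x : E3 | x ∈ W ∧ x ≠ 0} = pairSet K := by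
  obtain ⟨x, y, hli, rfl⟩ := exists_eq_span_pair hW
  have hset := nonzero_span_pair hli
  have hpair : ∀ z ∈ ({x, y, x + y} : Set E3), ∃ i j, i ≠ j ∧ z = pairCls i j := by
    intro z hz
    rw [← hset] at hz
    obtain ⟨S, hS, rfl⟩ := hrep z hz.1 hz.2
    obtain ⟨i, j, hij, rfl⟩ := Finset.card_eq_two.mp hS
    exact ⟨i, j, hij, cls_pair hij⟩
  obtain ⟨i, j, hij, rfl⟩ := hpair x (by simp)
  obtain ⟨k, l, hkl, rfl⟩ := hpair y (by simp)
  obtain ⟨m, n, hmn, e⟩ := hpair (pairCls i j + pairCls k l) (by simp)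
  have hne : pairCls i j ≠ pairCls k l := fun h => by
    simpa using hli.injective.ne (by decide : (0 : Fin 2) ≠ 1) h
  rw [hset]
  -- After swapping the names within each pair, the common point is the first entry of both.
  obtain ⟨a, b, c, hab, hac, h1, h2⟩ : ∃ a b c, a ≠ b ∧ a ≠ c ∧
      pairCls i j = pairCls a b ∧ pairCls k l = pairCls a c := by
    rcases exists_common hij hkl e with rfl | rfl | rfl | rfl
    · exact ⟨i, j, l, hij, hkl, rfl, rfl⟩
    · exact ⟨i, j, k, hij, hkl.symm, rfl, pairCls_comm _ _⟩
    · exact ⟨j, i, l, hij.symm, hkl, pairCls_comm _ _, rfl⟩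
    · exact ⟨j, i, k, hij.symm, hkl.symm, pairCls_comm _ _, pairCls_comm _ _⟩
  rw [h1, h2] at hne ⊢
  have hbc : b ≠ c := fun h => hne (by rw [h])
  exact ⟨{a, b, c}, Finset.card_eq_three.mpr ⟨a, b, c, hab, hac, hbc, rfl⟩,
    (pairSet_triple hab hac hbc).symm⟩

lemma exists_subspace {K : Finset (Fin 8)} (hK : K.card = 3) :
    ∃ W : Submodule (ZMod 2) E3, Module.finrank (ZMod 2) W = 2 ∧
      (∀ x ∈ W, x ≠ 0 → hasRep 2 x) ∧ {x : E3 | x ∈ W ∧ x ≠ 0} = pairSet K := by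
  obtain ⟨a, b, c, hab, hac, hbc, rfl⟩ := Finset.card_eq_three.mp hK
  have hne : pairCls a b ≠ pairCls a c := fun h => by
    have := pairCls_inj hab h
    grind
  have hli := linearIndependent_pair_zmod_two (pairCls_ne_zero hab) (pairCls_ne_zero hac) hne
  have hset := (nonzero_span_pair hli).trans (pairSet_triple hab hac hbc).symm
  refine ⟨span (ZMod 2) {pairCls a b, pairCls a c}, ?_, ?_, hset⟩
  · have hr : Set.range ![pairCls a b, pairCls a c] = {pairCls a b, pairCls a c} := by
      simp [Matrix.range_cons, Set.pair_comm]
    rw [← hr]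
    exact (finrank_span_eq_card hli).trans (Fintype.card_fin 2)
  · intro x hx hx0
    have hmem : x ∈ pairSet {a, b, c} := hset ▸ ⟨hx, hx0⟩
    obtain ⟨i, _, j, _, hij, rfl⟩ := hmem
    exact ⟨{i, j}, Finset.card_pair hij, rfl⟩

lemma pairSet_injective {K L : Finset (Fin 8)} (hK : K.card = 3) (hL : L.card = 3)
    (h : pairSet K = pairSet L) : K = L :=
  (subset_of_pairSet_subset (by omega) h.subset).antisymm
    (subset_of_pairSet_subset (by omega) h.superset)

lemma eq_of_nonzero_eq {W W' : Submodule (ZMod 2) E3}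
    (h : {x : E3 | x ∈ W ∧ x ≠ 0} = {x : E3 | x ∈ W' ∧ x ≠ 0}) : W = W' := by
  ext x
  by_cases hx : x = 0
  · simp [hx]
  · simpa [hx] using Set.ext_iff.mp h x

lemma card_triples : Nat.card {K : Finset (Fin 8) // K.card = 3} = 56 := by
  rw [Nat.card_eq_fintype_card, Fintype.card_finset_len, Fintype.card_fin]
  rfl

/-- a 2-dimensional subspace `W ⊆ E₃` all three of whose nonzero
elements have a 2-element representative determines a unique 3-element subset
`{i,j,k} ⊆ I` with nonzero elements of `W` exactly `[{i,j}], [{i,k}], [{j,k}]`;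
conversely every 3-element subset of `I` determines such a subspace.  Hence these
subspaces (type I.1) are in bijection with the 56 three-element subsets of an
8-element set. -/
theorem statement13 :
    (∀ W : Submodule (ZMod 2) E3, Module.finrank (ZMod 2) W = 2 →
      (∀ x ∈ W, x ≠ 0 → hasRep 2 x) →
      ∃! K : Finset (Fin 8), K.card = 3 ∧
        {x : E3 | x ∈ W ∧ x ≠ 0} =
          {x : E3 | ∃ i ∈ K, ∃ j ∈ K, i ≠ j ∧ x = cls {i, j}}) ∧
    (∀ K : Finset (Fin 8), K.card = 3 →
      ∃ W : Submodule (ZMod 2) E3, Module.finrank (ZMod 2) W = 2 ∧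
        (∀ x ∈ W, x ≠ 0 → hasRep 2 x) ∧
        {x : E3 | x ∈ W ∧ x ≠ 0} =
          {x : E3 | ∃ i ∈ K, ∃ j ∈ K, i ≠ j ∧ x = cls {i, j}}) ∧
    Nat.card {K : Finset (Fin 8) // K.card = 3} = 56 ∧
    Nat.card {W : Submodule (ZMod 2) E3 //
      Module.finrank (ZMod 2) W = 2 ∧ ∀ x ∈ W, x ≠ 0 → hasRep 2 x} = 56 := by
  refine ⟨fun W hW hrep => ?_, fun K hK => exists_subspace hK, card_triples, ?_⟩
  · obtain ⟨K, hK, hset⟩ := exists_triple hW hrep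
    exact ⟨K, ⟨hK, hset⟩, fun L hL => pairSet_injective hL.1 hK (hL.2.symm.trans hset)⟩
  · choose f hf hfset using fun W : {W : Submodule (ZMod 2) E3 //
      Module.finrank (ZMod 2) W = 2 ∧ ∀ x ∈ W, x ≠ 0 → hasRep 2 x} =>
        exists_triple W.2.1 W.2.2
    rw [← card_triples]
    refine Nat.card_congr (Equiv.ofBijective (fun W => ⟨f W, hf W⟩) ⟨fun W W' h => ?_, ?_⟩)
    · have hff : f W = f W' := congrArg Subtype.val h
      exact Subtype.ext (eq_of_nonzero_eq ((hfset W).trans (hff ▸ (hfset W').symm)))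
    · rintro ⟨K, hK⟩
      obtain ⟨W, hW, hrep, hset⟩ := exists_subspace hK
      exact ⟨⟨W, hW, hrep⟩, Subtype.ext
        (pairSet_injective (hf _) hK ((hfset ⟨W, hW, hrep⟩).symm.trans hset))⟩

end
end
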